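/- (Lemma 1(a), concrete form) For every δ > 0 and γ > 0, every solution xₐ of the average system ẋₐ = −(γ/2)·b₁δ(xₐ) defined on [0,∞) is bounded, and there exists T ≥ 0 such that |xₐ(t) − x*| ≤ δ for all t ≥ T; i.e. all trajectories of the average system enter and remain in the interval [x* − δ, x* + δ]. -/

import Mathlib

open Real MeasureTheory intervalIntegral Filter

/-- First Fourier sine coefficient of `t ↦ h (x + δ sin (2π t))`. -/
noncomputable def b1 (h : ℝ → ℝ) (δ x : ℝ) : ℝ :=
  2 * ∫ t in (0:ℝ)..1, h (x + δ * Real.sin (2 * Real.pi * t)) * Real.sin (2 * Real.pi * t)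

/-!
If `δ ≤ |x - x*|`, the window `[x - δ, x + δ]` lies on one side of `x*`, where `h` is strictly
monotone. As the sine has mean zero, `h (x + δ sin)` may be replaced by `h (x + δ sin) - h x` in
the integral defining `b1 h δ x`; the integrand then has a constant sign, so that
`(x - x*) * b1 h δ x > 0`. Hence `(xa - x*)²` decreases as long as `δ ≤ |xa - x*|`, which bounds the
trajectory; on the compact set to which it is thus confined the rate of decrease is bounded away
from zero, so the level `δ²` is reached in finite time and never exceeded afterwards.
-/

open scoped InnerProductSpace

section Monotonicity

variable {X Y : Type*}
  [ConditionallyCompleteLinearOrder X] [DenselyOrdered X] [TopologicalSpace X] [OrderTopology X]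
  [LinearOrder Y] [TopologicalSpace Y] [OrderClosedTopology Y]
  {f : X → Y} {a : X}

theorem strictMonoOn_Ici_of_injOn_of_isMinOn (hf : ContinuousOn f (Set.Ici a))
    (hinj : Set.InjOn f (Set.Ici a)) (hmin : IsMinOn f (Set.Ici a) a) :
    StrictMonoOn f (Set.Ici a) := by
  intro x hx y hy hxy
  have hsub : Set.Icc a y ⊆ Set.Ici a := Set.Icc_subset_Ici_self
  exact (hf.mono hsub).strictMonoOn_of_injOn_Icc hy (hmin hy) (hinj.mono hsub)
    ⟨hx, hxy.le⟩ ⟨hy, le_rfl⟩ hxy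

theorem strictAntiOn_Iic_of_injOn_of_isMinOn (hf : ContinuousOn f (Set.Iic a))
    (hinj : Set.InjOn f (Set.Iic a)) (hmin : IsMinOn f (Set.Iic a) a) :
    StrictAntiOn f (Set.Iic a) := by
  intro x hx y hy hxy
  have hsub : Set.Icc x a ⊆ Set.Iic a := Set.Icc_subset_Iic_self
  exact (hf.mono hsub).strictAntiOn_of_injOn_Icc hx (hmin hx) (hinj.mono hsub)
    ⟨le_rfl, hx⟩ ⟨hxy.le, hy⟩ hxy

end Monotonicity

theorem sub_mul_sub_pos_of_strictMonoOn {R : Type*} [Ring R] [LinearOrder R]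
    [IsStrictOrderedRing R] {f : R → R} {s : Set R} (hf : StrictMonoOn f s) {x y : R}
    (hx : x ∈ s) (hy : y ∈ s) (hne : x ≠ y) : 0 < (f y - f x) * (y - x) := by
  rcases hne.lt_or_gt with hlt | hgt
  · exact mul_pos (sub_pos.2 (hf hx hy hlt)) (sub_pos.2 hlt)
  · exact mul_pos_of_neg_of_neg (sub_neg.2 (hf hy hx hgt)) (sub_neg.2 hgt)

theorem injOn_of_le_dist {X Y : Type*} [MetricSpace X] [PseudoMetricSpace Y] {f : X → Y}
    {s : Set X} {α : ℝ → ℝ} (hα : ∀ r, 0 < r → 0 < α r)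
    (hf : ∀ x ∈ s, ∀ y ∈ s, α (dist x y) ≤ dist (f x) (f y)) : Set.InjOn f s := by
  intro x hx y hy hxy
  by_contra hne
  have hpos : 0 < dist (f x) (f y) := (hα _ (dist_pos.2 hne)).trans_le (hf x hx y hy)
  rw [hxy, dist_self] at hpos
  exact hpos.false

theorem strictAntiOn_Iic_and_strictMonoOn_Ici_of_le_abs_sub {f : ℝ → ℝ} {a : ℝ} {α : ℝ → ℝ}
    (hf : Continuous f) (hmin : ∀ x, f a ≤ f x) (hα : ∀ r, 0 < r → 0 < α r)
    (hlb : ∀ x y, 0 ≤ (x - a) * (y - a) → α |y - x| ≤ |f y - f x|) :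
    StrictAntiOn f (Set.Iic a) ∧ StrictMonoOn f (Set.Ici a) := by
  have hinj {s : Set ℝ} (hs : ∀ x ∈ s, ∀ y ∈ s, 0 ≤ (x - a) * (y - a)) : Set.InjOn f s :=
    injOn_of_le_dist hα fun x hx y hy => hlb y x (hs y hy x hx)
  refine ⟨strictAntiOn_Iic_of_injOn_of_isMinOn hf.continuousOn (hinj ?_) fun x _ => hmin x,
    strictMonoOn_Ici_of_injOn_of_isMinOn hf.continuousOn (hinj ?_) fun x _ => hmin x⟩
  · exact fun x hx y hy => mul_nonneg_of_nonpos_of_nonpos (sub_nonpos.2 hx) (sub_nonpos.2 hy)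
  · exact fun x hx y hy => mul_nonneg (sub_nonneg.2 hx) (sub_nonneg.2 hy)

section FourierCoefficient

variable {h : ℝ → ℝ} {δ x : ℝ}

theorem integral_sin_two_pi_mul : ∫ t in (0:ℝ)..1, Real.sin (2 * Real.pi * t) = 0 := by
  rw [intervalIntegral.integral_comp_mul_left Real.sin (by positivity)]
  simp

theorem b1_eq_integral_sub (hh : Continuous h) (δ x c : ℝ) :
    b1 h δ x = 2 * ∫ t in (0:ℝ)..1,
      (h (x + δ * Real.sin (2 * Real.pi * t)) - c) * Real.sin (2 * Real.pi * t) := by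
  simp only [sub_mul]
  rw [intervalIntegral.integral_sub (Continuous.intervalIntegrable (by fun_prop) _ _)
    (Continuous.intervalIntegrable (by fun_prop) _ _), intervalIntegral.integral_const_mul,
    integral_sin_two_pi_mul, mul_zero, sub_zero, b1]

theorem b1_fun_neg (h : ℝ → ℝ) (δ x : ℝ) : b1 (fun y => -h y) δ x = -b1 h δ x := by
  simp only [b1, neg_mul, intervalIntegral.integral_neg, mul_neg]

theorem continuous_b1 (hh : Continuous h) (δ : ℝ) : Continuous (b1 h δ) :=
  continuous_const.mul <|
    intervalIntegral.continuous_parametric_intervalIntegral_of_continuous' (by fun_prop) 0 1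

theorem b1_pos_of_strictMonoOn (hh : Continuous h) (hδ : 0 < δ)
    (hmono : StrictMonoOn h (Set.Icc (x - δ) (x + δ))) : 0 < b1 h δ x := by
  have hx : x ∈ Set.Icc (x - δ) (x + δ) := ⟨by linarith, by linarith⟩
  have hmem (t : ℝ) : x + δ * Real.sin (2 * Real.pi * t) ∈ Set.Icc (x - δ) (x + δ) :=
    ⟨by nlinarith [Real.neg_one_le_sin (2 * Real.pi * t)],
      by nlinarith [Real.sin_le_one (2 * Real.pi * t)]⟩
  have hpos {t : ℝ} (ht : Real.sin (2 * Real.pi * t) ≠ 0) :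
      0 < (h (x + δ * Real.sin (2 * Real.pi * t)) - h x) * Real.sin (2 * Real.pi * t) := by
    have hne : x ≠ x + δ * Real.sin (2 * Real.pi * t) :=
      (add_ne_left.2 (mul_ne_zero hδ.ne' ht)).symm
    have hδpos := sub_mul_sub_pos_of_strictMonoOn hmono hx (hmem t) hne
    rw [add_sub_cancel_left, mul_left_comm] at hδpos
    exact pos_of_mul_pos_right hδpos hδ.le
  rw [b1_eq_integral_sub hh δ x (h x)]
  refine mul_pos two_pos <| intervalIntegral.integral_pos one_pos
    (Continuous.continuousOn (by fun_prop)) (fun t _ => ?_) ⟨1 / 4, by norm_num, hpos ?_⟩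
  · by_cases ht : Real.sin (2 * Real.pi * t) = 0
    · simp only [ht, mul_zero, le_refl]
    · exact (hpos ht).le
  · rw [show 2 * Real.pi * (1 / 4) = Real.pi / 2 by ring, Real.sin_pi_div_two]
    exact one_ne_zero

theorem b1_neg_of_strictAntiOn (hh : Continuous h) (hδ : 0 < δ)
    (hanti : StrictAntiOn h (Set.Icc (x - δ) (x + δ))) : b1 h δ x < 0 := by
  rw [← neg_pos, ← b1_fun_neg]
  exact b1_pos_of_strictMonoOn hh.neg hδ hanti.neg

theorem sub_mul_b1_pos {xstar : ℝ} (hh : Continuous h)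
    (hanti : StrictAntiOn h (Set.Iic xstar)) (hmono : StrictMonoOn h (Set.Ici xstar))
    (hδ : 0 < δ) (hx : δ ≤ |x - xstar|) : 0 < (x - xstar) * b1 h δ x := by
  rcases le_abs.1 hx with hright | hleft
  · refine mul_pos (hδ.trans_le hright) (b1_pos_of_strictMonoOn hh hδ ?_)
    exact hmono.mono (Set.Icc_subset_Ici_self.trans (Set.Ici_subset_Ici.2 (by linarith)))
  · refine mul_pos_of_neg_of_neg (by linarith) (b1_neg_of_strictAntiOn hh hδ ?_)
    exact hanti.mono (Set.Icc_subset_Iic_self.trans (Set.Iic_subset_Iic.2 (by linarith)))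

end FourierCoefficient

section DifferentialInequality

variable {V V' : ℝ → ℝ} {a K : ℝ}

theorem le_of_deriv_right_neg_of_eq (hcont : ContinuousOn V (Set.Ici a))
    (hV : ∀ t, a ≤ t → HasDerivWithinAt V (V' t) (Set.Ici t) t)
    (hneg : ∀ t, a ≤ t → V t = K → V' t < 0) (ha : V a ≤ K) {t : ℝ} (ht : a ≤ t) : V t ≤ K :=
  image_le_of_deriv_right_lt_deriv_boundary' (hcont.mono Set.Icc_subset_Ici_self)
    (fun s hs => hV s hs.1) ha continuousOn_const (fun _ _ => hasDerivWithinAt_const _ _ K)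
    (fun s hs => hneg s hs.1) ⟨ht, le_rfl⟩

theorem exists_le_of_deriv_right_le {c : ℝ} (hc : 0 < c) (hcont : ContinuousOn V (Set.Ici a))
    (hV : ∀ t, a ≤ t → HasDerivWithinAt V (V' t) (Set.Ici t) t)
    (hdecr : ∀ t, a ≤ t → K < V t → V' t ≤ -c) : ∃ t, a ≤ t ∧ V t ≤ K := by
  by_contra! habove
  have hlin {t : ℝ} (ht : a ≤ t) : V t ≤ V a + -c * (t - a) :=
    image_le_of_deriv_right_le_deriv_boundary (B := fun s => V a + -c * (s - a))
      (hcont.mono Set.Icc_subset_Ici_self) (fun s hs => hV s hs.1) (by simp) (by fun_prop)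
      (fun s _ => by
        simpa using ((((hasDerivAt_id s).sub_const a).const_mul (-c)).const_add
          (V a)).hasDerivWithinAt)
      (fun s hs => hdecr s hs.1 (habove s hs.1)) ⟨ht, le_rfl⟩
  -- The time at which the line of slope `-c` through `(a, V a)` reaches the level `K`.
  have hT : a ≤ a + (V a - K) / c :=
    le_add_of_nonneg_right (div_nonneg (sub_nonneg.2 (habove a le_rfl).le) hc.le)
  have hreach : V a + -c * (a + (V a - K) / c - a) = K := by field_simp; ring
  exact (habove _ hT).not_ge ((hlin hT).trans_eq hreach)

end DifferentialInequality

section InwardField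

variable {E : Type*} [NormedAddCommGroup E] [InnerProductSpace ℝ E]
  {f : E → E} {p : E} {r : ℝ} {x : ℝ → E}

theorem hasDerivWithinAt_norm_sub_sq {s : Set ℝ} {t : ℝ} {x' : E}
    (hx : HasDerivWithinAt x x' s t) :
    HasDerivWithinAt (fun u => ‖x u - p‖ ^ 2) (2 * ⟪x t - p, x'⟫_ℝ) s t :=
  (hx.sub_const p).norm_sq

theorem norm_sub_le_of_inner_neg
    (hx : ∀ t, 0 ≤ t → HasDerivWithinAt x (f (x t)) (Set.Ici 0) t)
    (hf : ∀ y, r ≤ ‖y - p‖ → ⟪y - p, f y⟫_ℝ < 0) {R a t : ℝ} (hR : r ≤ R)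
    (ha : 0 ≤ a) (hxa : ‖x a - p‖ ≤ R) (ht : a ≤ t) : ‖x t - p‖ ≤ R := by
  have hR0 : 0 ≤ R := (norm_nonneg _).trans hxa
  rw [← sq_le_sq₀ (norm_nonneg _) hR0] at hxa ⊢
  refine le_of_deriv_right_neg_of_eq (V := fun u => ‖x u - p‖ ^ 2)
    (V' := fun u => 2 * ⟪x u - p, f (x u)⟫_ℝ) (fun s hs => ?_)
    (fun s hs => ?_) (fun s _ hs => ?_) hxa ht
  · exact (hasDerivWithinAt_norm_sub_sq (hx s (ha.trans hs))).continuousWithinAt.mono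
      (Set.Ici_subset_Ici.2 ha)
  · exact (hasDerivWithinAt_norm_sub_sq (hx s (ha.trans hs))).mono
      (Set.Ici_subset_Ici.2 (ha.trans hs))
  · have hnorm : ‖x s - p‖ = R := (sq_eq_sq₀ (norm_nonneg _) hR0).1 hs
    linarith [hf (x s) (hnorm ▸ hR)]

theorem exists_forall_norm_sub_le_of_inner_neg
    (hx : ∀ t, 0 ≤ t → HasDerivWithinAt x (f (x t)) (Set.Ici 0) t)
    (hf : ∀ y, r ≤ ‖y - p‖ → ⟪y - p, f y⟫_ℝ < 0) :
    ∃ R, ∀ t, 0 ≤ t → ‖x t - p‖ ≤ R :=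
  ⟨max r ‖x 0 - p‖, fun _ ht =>
    norm_sub_le_of_inner_neg hx hf (le_max_left _ _) le_rfl (le_max_right _ _) ht⟩

theorem exists_pos_forall_inner_le_neg [ProperSpace E]
    (hcont : ContinuousOn f {y | r ≤ ‖y - p‖})
    (hf : ∀ y, r ≤ ‖y - p‖ → ⟪y - p, f y⟫_ℝ < 0) (R : ℝ) :
    ∃ c, 0 < c ∧ ∀ y, r ≤ ‖y - p‖ → ‖y - p‖ ≤ R → ⟪y - p, f y⟫_ℝ ≤ -c := by
  have hclosed : IsClosed {y : E | r ≤ ‖y - p‖} := isClosed_le (by fun_prop) (by fun_prop)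
  have hcompact : IsCompact ({y : E | r ≤ ‖y - p‖} ∩ Metric.closedBall p R) :=
    (isCompact_closedBall p R).inter_left hclosed
  have hinner : ContinuousOn (fun y => -⟪y - p, f y⟫_ℝ) {y | r ≤ ‖y - p‖} :=
    ((continuousOn_id.sub continuousOn_const).inner hcont).neg
  obtain ⟨c, hc, hle⟩ := hcompact.exists_forall_le' (hinner.mono Set.inter_subset_left)
    (fun y hy => neg_pos.2 (hf y hy.1))
  exact ⟨c, hc, fun y hry hyR => le_neg_of_le_neg (hle y ⟨hry, mem_closedBall_iff_norm.2 hyR⟩)⟩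

theorem exists_forall_ge_norm_sub_le_of_inner_neg [ProperSpace E]
    (hx : ∀ t, 0 ≤ t → HasDerivWithinAt x (f (x t)) (Set.Ici 0) t)
    (hcont : ContinuousOn f {y | r ≤ ‖y - p‖})
    (hf : ∀ y, r ≤ ‖y - p‖ → ⟪y - p, f y⟫_ℝ < 0) :
    ∃ T, 0 ≤ T ∧ ∀ t, T ≤ t → ‖x t - p‖ ≤ r := by
  have hr : 0 ≤ r := by
    by_contra! hr
    simpa using hf p (by simpa using hr.le)
  obtain ⟨R, hR⟩ := exists_forall_norm_sub_le_of_inner_neg hx hf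
  obtain ⟨c, hc, hinner⟩ := exists_pos_forall_inner_le_neg hcont hf R
  obtain ⟨T, hT, hxT⟩ : ∃ T, 0 ≤ T ∧ ‖x T - p‖ ^ 2 ≤ r ^ 2 :=
    exists_le_of_deriv_right_le (mul_pos two_pos hc)
      (fun t ht => (hasDerivWithinAt_norm_sub_sq (hx t ht)).continuousWithinAt)
      (fun t ht => (hasDerivWithinAt_norm_sub_sq (hx t ht)).mono (Set.Ici_subset_Ici.2 ht))
      (fun t ht hlt => by
        have hrt : r ≤ ‖x t - p‖ := ((sq_lt_sq₀ hr (norm_nonneg _)).1 hlt).le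
        linarith [hinner (x t) hrt (hR t ht)])
  exact ⟨T, hT, fun t ht =>
    norm_sub_le_of_inner_neg hx hf le_rfl hT ((sq_le_sq₀ (norm_nonneg _) hr).1 hxT) ht⟩

end InwardField

theorem average_global_attractivity_general {h : ℝ → ℝ} (hh : Continuous h) {xstar : ℝ}
    (hanti : StrictAntiOn h (Set.Iic xstar)) (hmono : StrictMonoOn h (Set.Ici xstar))
    {δ γ : ℝ} (hδ : 0 < δ) (hγ : 0 < γ) {xa : ℝ → ℝ}
    (hsol : ∀ t, 0 ≤ t → HasDerivWithinAt xa (-(γ / 2) * b1 h δ (xa t)) (Set.Ici 0) t) :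
    (∃ M : ℝ, ∀ t, 0 ≤ t → |xa t| ≤ M) ∧
    (∃ T : ℝ, 0 ≤ T ∧ ∀ t, T ≤ t → |xa t - xstar| ≤ δ) := by
  have hcont : Continuous fun y => -(γ / 2) * b1 h δ y :=
    continuous_const.mul (continuous_b1 hh δ)
  have hinward (y : ℝ) (hy : δ ≤ ‖y - xstar‖) :
      ⟪y - xstar, -(γ / 2) * b1 h δ y⟫_ℝ < 0 := by
    have hpos : 0 < γ / 2 * ((y - xstar) * b1 h δ y) :=
      mul_pos (half_pos hγ) (sub_mul_b1_pos hh hanti hmono hδ hy)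
    rw [Real.inner_apply]
    linarith
  refine ⟨?_, exists_forall_ge_norm_sub_le_of_inner_neg hsol hcont.continuousOn hinward⟩
  obtain ⟨R, hR⟩ := exists_forall_norm_sub_le_of_inner_neg hsol hinward
  refine ⟨R + |xstar|, fun t ht => ?_⟩
  linarith [abs_sub_abs_le_abs_sub (xa t) xstar, Real.norm_eq_abs (xa t - xstar) ▸ hR t ht]

/-- Lemma 1(a), concrete form: every trajectory of the average system is
bounded, and enters and remains in `[x* - δ, x* + δ]`. -/
theorem average_global_attractivity (h : ℝ → ℝ) (hsmooth : ContDiff ℝ (⊤ : ℕ∞) h)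
    (xstar : ℝ) (hmin : ∀ x : ℝ, x ≠ xstar → h xstar < h x)
    (α : ℝ → ℝ) (hα_cont : ContinuousOn α (Set.Ici 0))
    (hα_mono : StrictMonoOn α (Set.Ici 0)) (hα0 : α 0 = 0)
    (hα_top : Tendsto α atTop atTop)
    (hlb : ∀ x₁ x₂ : ℝ, (x₁ - xstar) * (x₂ - xstar) ≥ 0 → α |x₂ - x₁| ≤ |h x₂ - h x₁|)
    (δ γ : ℝ) (hδ : 0 < δ) (hγ : 0 < γ)
    (xa : ℝ → ℝ) (hdiff : Differentiable ℝ xa)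
    (hsol : ∀ t : ℝ, 0 ≤ t → HasDerivAt xa (-(γ / 2) * b1 h δ (xa t)) t) :
    (∃ M : ℝ, ∀ t : ℝ, 0 ≤ t → |xa t| ≤ M) ∧
    (∃ T : ℝ, 0 ≤ T ∧ ∀ t : ℝ, T ≤ t → |xa t - xstar| ≤ δ) := by
  have hmin' (x : ℝ) : h xstar ≤ h x := by
    rcases eq_or_ne x xstar with rfl | hx
    exacts [le_rfl, (hmin x hx).le]
  have hαpos (r : ℝ) (hr : 0 < r) : 0 < α r := hα0 ▸ hα_mono Set.self_mem_Ici hr.le hr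
  obtain ⟨hanti, hmono⟩ :=
    strictAntiOn_Iic_and_strictMonoOn_Ici_of_le_abs_sub hsmooth.continuous hmin' hαpos hlb
  exact average_global_attractivity_general hsmooth.continuous hanti hmono hδ hγ
    fun t ht => (hsol t ht).hasDerivWithinAt
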